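/- Integral representation of depth-one cyclotomic S-sums: let a, c be positive integers, b a nonnegative integer, d a nonzero real, and n ∈ ℕ. Define G_1(u) = ∫_0^u x^{a+b−1} (d^n x^{a n} − 1)/(x^a − 1/d) dx for u ∈ [0,1], and G_{j+1}(u) = ∫_0^u G_j(x)/x dx for 1 ≤ j < c. Then G_c(1) = S_{(a,b,c)}(d; n) = Σ_{i=1}^n d^i/(a i + b)^c. -/

import Mathlib

/-- Cyclotomic S-sums: `cycS [((a₁,b₁,c₁),x₁),…] n` is
`S_{(a₁,b₁,c₁),…}(x₁,…; n)`. The empty sum equals `1`. -/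
noncomputable def cycS : List ((ℕ × ℤ × ℕ) × ℝ) → ℕ → ℝ
  | [], _ => 1
  | ((a, b, c), x) :: t, n =>
      ∑ i ∈ Finset.Icc 1 n, x ^ i / ((a : ℝ) * i + (b : ℝ)) ^ c * cycS t i

/-- `GFun a b n d j` is the iterated integral `G_{j+1}` of the statement:
`G_1(u) = ∫_0^u x^{a+b−1}(d^n x^{an} − 1)/(x^a − 1/d) dx` and
`G_{j+1}(u) = ∫_0^u G_j(x)/x dx`. -/
noncomputable def GFun (a b n : ℕ) (d : ℝ) : ℕ → ℝ → ℝ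
  | 0, u => ∫ x in (0 : ℝ)..u,
      x ^ (a + b - 1) * (d ^ n * x ^ (a * n) - 1) / (x ^ a - 1 / d)
  | j + 1, u => ∫ x in (0 : ℝ)..u, GFun a b n d j x / x

/-!
Integration against `dx / x` from `0` is diagonal on monomials: it sends `x ^ m` to `u ^ m / m`.
Summing the geometric series, the integrand of `G₁` is `(∑ᵢ dⁱ x ^ (a i + b)) / x` almost
everywhere, so `G_c` is the `c`-fold image of `∑ᵢ dⁱ x ^ (a i + b)` under this operator and each
monomial picks up the factor `1 / (a i + b) ^ c`.
-/

open MeasureTheory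

/-- The primitive of `f` with respect to the measure `dx / x`, normalised to vanish at `0`. -/
noncomputable def logPrimitive (f : ℝ → ℝ) (u : ℝ) : ℝ :=
  ∫ x in (0 : ℝ)..u, f x / x

section Monomials

variable {ι : Type*} {s : Finset ι} {m : ι → ℕ}

theorem integral_sum_mul_pow_sub_one (w : ι → ℝ) (hm : ∀ i ∈ s, m i ≠ 0) (u : ℝ) :
    ∫ x in (0 : ℝ)..u, ∑ i ∈ s, w i * x ^ (m i - 1) = ∑ i ∈ s, w i / m i * u ^ m i := by
  rw [intervalIntegral.integral_finsetSum fun i _ =>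
    Continuous.intervalIntegrable (by fun_prop) 0 u]
  refine Finset.sum_congr rfl fun i hi => ?_
  obtain ⟨k, hk⟩ := Nat.exists_eq_succ_of_ne_zero (hm i hi)
  rw [intervalIntegral.integral_const_mul, hk, Nat.succ_sub_one, integral_pow,
    zero_pow k.succ_ne_zero, sub_zero, Nat.cast_succ, mul_div_assoc', div_mul_eq_mul_div]

theorem logPrimitive_sum_mul_pow (w : ι → ℝ) (hm : ∀ i ∈ s, m i ≠ 0) :
    logPrimitive (fun x => ∑ i ∈ s, w i * x ^ m i) =
      fun u => ∑ i ∈ s, w i / m i * u ^ m i := by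
  funext u
  rw [← integral_sum_mul_pow_sub_one w hm u]
  refine intervalIntegral.integral_congr_ae ?_
  filter_upwards [Measure.ae_ne volume (0 : ℝ)] with x hx _
  rw [Finset.sum_div]
  refine Finset.sum_congr rfl fun i hi => ?_
  rw [mul_div_assoc, ← pow_sub_one_mul (hm i hi) x, mul_div_cancel_right₀ _ hx]

theorem iterate_logPrimitive_sum_mul_pow (w : ι → ℝ) (hm : ∀ i ∈ s, m i ≠ 0) (c : ℕ) :
    logPrimitive^[c] (fun x => ∑ i ∈ s, w i * x ^ m i) =
      fun u => ∑ i ∈ s, w i / (m i : ℝ) ^ c * u ^ m i := by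
  induction c with
  | zero => simp only [Function.iterate_zero, id_eq, pow_zero, div_one]
  | succ c ih =>
    rw [Function.iterate_succ_apply', ih, logPrimitive_sum_mul_pow _ hm]
    simp only [div_div, pow_succ]

end Monomials

theorem sum_Icc_pow_mul_pow_div {K : Type*} [Field K] {a b : ℕ} (hab : 0 < a + b) (n : ℕ)
    {d x : K} (hd : d ≠ 0) (hx : x ≠ 0) (hxd : x ^ a ≠ 1 / d) :
    (∑ i ∈ Finset.Icc 1 n, d ^ i * x ^ (a * i + b)) / x =
      x ^ (a + b - 1) * (d ^ n * x ^ (a * n) - 1) / (x ^ a - 1 / d) := by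
  have hne : d * x ^ a ≠ 1 := fun h => hxd (eq_one_div_of_mul_eq_one_right h)
  have hgeom : ∑ i ∈ Finset.Icc 1 n, (d * x ^ a) ^ i =
      ((d * x ^ a) ^ (n + 1) - (d * x ^ a) ^ 1) / (d * x ^ a - 1) := by
    rw [← Finset.Ico_succ_right_eq_Icc]
    exact geom_sum_Ico hne (Nat.le_add_left 1 n)
  have hfactor : ∑ i ∈ Finset.Icc 1 n, d ^ i * x ^ (a * i + b) =
      x ^ b * ∑ i ∈ Finset.Icc 1 n, (d * x ^ a) ^ i := by
    rw [Finset.mul_sum]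
    exact Finset.sum_congr rfl fun i _ => by ring
  have hden : d * x ^ a - 1 = d * (x ^ a - 1 / d) := by field_simp
  have hden_ne : x ^ a - 1 / d ≠ 0 := sub_ne_zero.mpr hxd
  have hpow : x ^ (a + b - 1) = x ^ (a + b) / x := by
    rw [eq_div_iff hx, pow_sub_one_mul hab.ne']
  rw [hfactor, hgeom, hden, hpow]
  generalize x ^ a - 1 / d = q at hden_ne
  field_simp
  ring

theorem ae_pow_ne {R : Type*} [CommRing R] [IsDomain R] [MeasurableSpace R] (μ : Measure R)
    [NullSingletonClass μ] {a : ℕ} (ha : 0 < a) (r : R) : ∀ᵐ x ∂μ, x ^ a ≠ r := by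
  have hfinite : {x : R | x ^ a = r}.Finite :=
    Polynomial.nthRootsFinset_toSet ha r ▸ (Polynomial.nthRootsFinset a r).finite_toSet
  exact hfinite.countable.ae_notMem μ

theorem GFun_eq_iterate_logPrimitive {a : ℕ} (b n : ℕ) {d : ℝ} (ha : 0 < a) (hd : d ≠ 0)
    (j : ℕ) :
    GFun a b n d j =
      logPrimitive^[j + 1] fun x => ∑ i ∈ Finset.Icc 1 n, d ^ i * x ^ (a * i + b) := by
  induction j with
  | zero =>
    funext u
    refine intervalIntegral.integral_congr_ae ?_
    filter_upwards [Measure.ae_ne volume (0 : ℝ), ae_pow_ne volume ha (1 / d)] with x hx hxd _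
    exact (sum_Icc_pow_mul_pow_div (Nat.add_pos_left ha b) n hd hx hxd).symm
  | succ j ih =>
    rw [Function.iterate_succ_apply', ← ih]
    rfl

theorem GFun_eq_sum {a : ℕ} (b n : ℕ) {d : ℝ} (ha : 0 < a) (hd : d ≠ 0) (j : ℕ) (u : ℝ) :
    GFun a b n d j u = ∑ i ∈ Finset.Icc 1 n,
      d ^ i / ((a : ℝ) * i + b) ^ (j + 1) * u ^ (a * i + b) := by
  have hexp : ∀ i ∈ Finset.Icc 1 n, a * i + b ≠ 0 := fun i hi => by
    have hi_pos : 0 < i := (Finset.mem_Icc.mp hi).1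
    positivity
  rw [GFun_eq_iterate_logPrimitive b n ha hd, iterate_logPrimitive_sum_mul_pow _ hexp]
  simp only [Nat.cast_add, Nat.cast_mul]

theorem cycS_singleton (a c n : ℕ) (b : ℤ) (x : ℝ) :
    cycS [((a, b, c), x)] n = ∑ i ∈ Finset.Icc 1 n, x ^ i / ((a : ℝ) * i + b) ^ c := by
  simp only [cycS, mul_one]

/-- Integral representation of depth-one cyclotomic S-sums:
`G_c(1) = S_{(a,b,c)}(d; n) = Σ_{i=1}^n d^i/(a i + b)^c`. -/
theorem cycS_depth_one_integral_rep (a c b n : ℕ) (d : ℝ)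
    (ha : 0 < a) (hc : 0 < c) (hd : d ≠ 0) :
    GFun a b n d (c - 1) 1 = cycS [((a, (b : ℤ), c), d)] n ∧
    cycS [((a, (b : ℤ), c), d)] n =
      ∑ i ∈ Finset.Icc 1 n, d ^ i / ((a : ℝ) * i + (b : ℝ)) ^ c := by
  have hsum : cycS [((a, (b : ℤ), c), d)] n =
      ∑ i ∈ Finset.Icc 1 n, d ^ i / ((a : ℝ) * i + (b : ℝ)) ^ c := by
    simp only [cycS_singleton, Int.cast_natCast]
  refine ⟨?_, hsum⟩
  rw [hsum, GFun_eq_sum b n ha hd, Nat.sub_add_cancel hc]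
  simp only [one_pow, mul_one]
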